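/- Let H be a graph with a non-edge {a,b} that is independent in ℝ³, and let G be any graph obtained from H by roof-addition along {a,b} (for any assignment of the edges of H incident to a and b to the split vertices). Then G is independent in ℝ³. -/

import Mathlib

/-! Independence is detected by equilibrium stresses: `G` is independent iff some placement `p`
carries no nonzero stress, i.e. no nonzero symmetric edge weighting `ω` with
`∑ j, ω i j • (p i - p j) = 0` at every vertex `i` (`isIndependent_iff_stressFree`).

Take a stress-free placement `p` of `H`, perturbed if necessary so that `p a ≠ p b`
(independence is an open condition). Place `a₁, a₂` at `p a` and `b₁, b₂` at `p b`. With
`e = p b - p a` completed to a basis `e, e₂, e₃`, and `p a` as the origin, put `u = e₂`, `v = e₃`,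
`c = x e + e₂ + e₃` and `c' = e + e₂ + e₃`, where `x` is still free. Given a stress of the new
graph, merging `a₁, a₂` and `b₁, b₂` turns its part on the cut graph into a weighting `ω` of `H`,
and its part on the roofs into a weighting of an octahedron on `a, b, u, v, c, c'` in equilibrium
at `u, v, c, c'`. Solving that system (`roof_stress`), the weighting of the octahedron depends on
one parameter `m`, and it exerts on `a` and `b` the force of an edge `ab` of weight
`t = m (x (1 + x) - 2)`. Hence `(ω, t)` is a stress of `H + ab`.

As `H` is stress-free, the stresses of `H + ab` are determined by `t`, so the force at `a` of those
edges which were assigned to `a₂` is `t f` for a fixed vector `f` (`exists_transferred_force`).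
The `e`-coordinate of the equilibrium at `a₂` then reads `t f₁ = -2 m`. Choosing `x` so that
`(x (1 + x) - 2) f₁ ≠ -2` forces `m = 0`; so `t = 0`, `ω = 0`, and the equilibrium at `a₂` and `b₂`
kills the weights of the remaining edges. -/


open SimpleGraph

variable {V : Type*}

/-- The rigidity row of an (ordered) pair of vertices at a framework `p`. -/
def rigidityRow [DecidableEq V] (p : V → Fin 3 → ℝ) (i j : V) : V → Fin 3 → ℝ :=
  fun k => if k = i then p i - p j else if k = j then p j - p i else 0

/-- The rank of the rigidity rows of `G` at `p`. -/
noncomputable def rankAt [DecidableEq V] (G : SimpleGraph V) (p : V → Fin 3 → ℝ) : ℕ :=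
  Module.finrank ℝ (Submodule.span ℝ
    {w : V → Fin 3 → ℝ | ∃ i j, G.Adj i j ∧ w = rigidityRow p i j})

/-- generic 3-dimensional rank of a graph. -/
noncomputable def genRank [DecidableEq V] (G : SimpleGraph V) : ℕ :=
  sSup {n : ℕ | ∃ p : V → Fin 3 → ℝ, n = rankAt G p}

noncomputable def numEdges (G : SimpleGraph V) : ℕ := G.edgeSet.ncard

def IsIndependent [DecidableEq V] (G : SimpleGraph V) : Prop := genRank G = numEdges G

def NucleationFree [DecidableEq V] (G : SimpleGraph V) : Prop :=
  ∀ S : Finset V, 5 ≤ S.card → genRank (G.induce (S : Set V)) ≠ 3 * S.card - 6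

def addEdge (G : SimpleGraph V) (x y : V) : SimpleGraph V :=
  G ⊔ SimpleGraph.fromEdgeSet {s(x, y)}

def IsImpliedNonEdge [DecidableEq V] (G : SimpleGraph V) (x y : V) : Prop :=
  x ≠ y ∧ ¬ G.Adj x y ∧ genRank (addEdge G x y) = genRank G

/-- The relation giving the edges of the *graph cutting* step of roof-addition on `H`
along the non-edge `{a, b}`: the vertex `Sum.inl a` plays the role of `a₁`,
`Sum.inl b` plays `b₁`, `Sum.inr 0` is `a₂` and `Sum.inr 1` is `b₂`; an edge `{a, y}`
of `H` is assigned to `a₂` iff `σ y = true` (otherwise to `a₁`), and an edge `{b, y}`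
is assigned to `b₂` iff `τ y = true` (otherwise to `b₁`). -/
def cutRel {V : Type*} [DecidableEq V] (H : SimpleGraph V) (a b : V) (σ τ : V → Bool) :
    V ⊕ Fin 6 → V ⊕ Fin 6 → Prop
  | Sum.inl x, Sum.inl y => H.Adj x y ∧ (x = a → σ y = false) ∧ (y = a → σ x = false) ∧
      (x = b → τ y = false) ∧ (y = b → τ x = false)
  | Sum.inr i, Sum.inl y => (i = 0 ∧ H.Adj a y ∧ σ y = true) ∨
      (i = 1 ∧ H.Adj b y ∧ τ y = true)
  | _, _ => False

/-- The graph obtained from `H` by the graph-cutting step of roof-addition along the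
non-edge `{a, b}` (before the two roofs are pasted in).  The vertices
`Sum.inr 2, …, Sum.inr 5` (the future `u, v, c, c′`) are still isolated. -/
def graphCut {V : Type*} [DecidableEq V] (H : SimpleGraph V) (a b : V) (σ τ : V → Bool) :
    SimpleGraph (V ⊕ Fin 6) :=
  SimpleGraph.fromRel (cutRel H a b σ τ)

/-- The relation giving the 16 edges of the two pasted roofs: with `a₁ = Sum.inl a`,
`b₁ = Sum.inl b`, `a₂ = Sum.inr 0`, `b₂ = Sum.inr 1`, `u = Sum.inr 2`, `v = Sum.inr 3`,
`c = Sum.inr 4`, `c′ = Sum.inr 5`, the edges are `a₁u, a₁v, a₁c, b₁u, b₁v, b₁c, uc, vc,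
a₂u, a₂v, a₂c′, b₂u, b₂v, b₂c′, uc′, vc′`. -/
def pasteRel {V : Type*} [DecidableEq V] (a b : V) :
    V ⊕ Fin 6 → V ⊕ Fin 6 → Prop
  | Sum.inl x, Sum.inr i => (x = a ∨ x = b) ∧ (i = 2 ∨ i = 3 ∨ i = 4)
  | Sum.inr i, Sum.inr j =>
      (i = 0 ∧ (j = 2 ∨ j = 3 ∨ j = 5)) ∨ (i = 1 ∧ (j = 2 ∨ j = 3 ∨ j = 5)) ∨
      (i = 2 ∧ (j = 4 ∨ j = 5)) ∨ (i = 3 ∧ (j = 4 ∨ j = 5))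
  | _, _ => False

/-- Roof-addition on `H` along the non-edge `{a, b}`, with the edges of `H` at `a`
(resp. `b`) distributed between the split vertices `a₁, a₂` (resp. `b₁, b₂`) according
to `σ` (resp. `τ`). -/
def roofAddition {V : Type*} [DecidableEq V] (H : SimpleGraph V) (a b : V)
    (σ τ : V → Bool) : SimpleGraph (V ⊕ Fin 6) :=
  graphCut H a b σ τ ⊔ SimpleGraph.fromRel (pasteRel a b)

/-! ### Stresses and independence -/

/-- The placement `p` of `G` carries only the zero equilibrium stress. A stress is encoded as a
symmetric function on ordered pairs of vertices vanishing off the edges of `G`. -/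
def StressFree {W : Type*} [Fintype W] (G : SimpleGraph W) (p : W → Fin 3 → ℝ) : Prop :=
  ∀ ω : W → W → ℝ, (∀ i j, ω i j = ω j i) → (∀ i j, ¬ G.Adj i j → ω i j = 0) →
    (∀ i, ∑ j, ω i j • (p i - p j) = 0) → ∀ i j, ω i j = 0

lemma rigidityRow_comm {W : Type*} [DecidableEq W] (p : W → Fin 3 → ℝ) (i j : W) :
    rigidityRow p i j = rigidityRow p j i := by
  funext k
  unfold rigidityRow
  split_ifs with h1 h2
  · subst h1; subst h2; rfl
  all_goals rfl

/-- The rigidity row of an unordered pair. -/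
def edgeRow {W : Type*} [DecidableEq W] (p : W → Fin 3 → ℝ) : Sym2 W → W → Fin 3 → ℝ :=
  Sym2.lift ⟨rigidityRow p, rigidityRow_comm p⟩

lemma rowSet_eq {W : Type*} [DecidableEq W] (G : SimpleGraph W) (p : W → Fin 3 → ℝ) :
    {w : W → Fin 3 → ℝ | ∃ i j, G.Adj i j ∧ w = rigidityRow p i j} =
      Set.range (fun e : G.edgeSet => edgeRow p e) := by
  ext w
  constructor
  · rintro ⟨i, j, h, rfl⟩
    exact ⟨⟨s(i, j), h⟩, rfl⟩
  · rintro ⟨⟨e, he⟩, rfl⟩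
    induction e using Sym2.ind with
    | _ i j => exact ⟨i, j, he, rfl⟩

lemma rankAt_le {W : Type*} [Fintype W] [DecidableEq W] (G : SimpleGraph W)
    (p : W → Fin 3 → ℝ) : rankAt G p ≤ numEdges G := by
  classical
  unfold rankAt numEdges
  rw [rowSet_eq, ← Nat.card_coe_set_eq, Nat.card_eq_fintype_card]
  exact finrank_range_le_card _

lemma rankAt_eq_iff {W : Type*} [Fintype W] [DecidableEq W] (G : SimpleGraph W)
    (p : W → Fin 3 → ℝ) :
    rankAt G p = numEdges G ↔ LinearIndependent ℝ (fun e : G.edgeSet => edgeRow p e) := by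
  classical
  unfold rankAt numEdges
  rw [rowSet_eq, ← Nat.card_coe_set_eq, Nat.card_eq_fintype_card,
    linearIndependent_iff_card_eq_finrank_span, eq_comm]
  rfl

lemma isIndependent_iff_linearIndependent {W : Type*} [Fintype W] [DecidableEq W]
    (G : SimpleGraph W) : IsIndependent G ↔
      ∃ p : W → Fin 3 → ℝ, LinearIndependent ℝ (fun e : G.edgeSet => edgeRow p e) := by
  have hbd : BddAbove {n : ℕ | ∃ p : W → Fin 3 → ℝ, n = rankAt G p} :=
    ⟨numEdges G, by rintro _ ⟨p, rfl⟩; exact rankAt_le G p⟩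
  have hne : {n : ℕ | ∃ p : W → Fin 3 → ℝ, n = rankAt G p}.Nonempty := ⟨_, 0, rfl⟩
  simp only [← rankAt_eq_iff]
  unfold IsIndependent
  constructor
  · intro h
    obtain ⟨p, hp⟩ := Nat.sSup_mem hne hbd
    exact ⟨p, hp.symm.trans h⟩
  · rintro ⟨p, hp⟩
    apply le_antisymm
    · apply csSup_le hne
      rintro _ ⟨p, rfl⟩
      exact rankAt_le G p
    · rw [← hp]
      exact le_csSup hbd ⟨p, rfl⟩

/-- A combination of rigidity rows records, at each vertex, the resultant of the edge forces. -/
lemma sum_edgeRow_apply {W : Type*} [Fintype W] [DecidableEq W] (p : W → Fin 3 → ℝ)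
    (w : Sym2 W → ℝ) (k : W) :
    (∑ e, w e • edgeRow p e) k = ∑ j, w s(k, j) • (p k - p j) := by
  rw [Finset.sum_apply]
  symm
  refine Fintype.sum_of_injective (fun j => s(k, j)) ?_ _ _ ?_ ?_
  · intro i j h
    exact Sym2.congr_right.1 h
  · intro e he
    induction e using Sym2.ind with
    | _ i j =>
      have h1 : k ≠ i := by rintro rfl; exact he ⟨j, rfl⟩
      have h2 : k ≠ j := by rintro rfl; exact he ⟨i, Sym2.eq_swap⟩
      simp [edgeRow, rigidityRow, h1, h2]
  · intro j
    simp [edgeRow, rigidityRow]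

lemma linearIndependent_iff_stressFree {W : Type*} [Fintype W] [DecidableEq W]
    (G : SimpleGraph W) (p : W → Fin 3 → ℝ) :
    LinearIndependent ℝ (fun e : G.edgeSet => edgeRow p e) ↔ StressFree G p := by
  classical
  have key : ∀ w : Sym2 W → ℝ, (∀ e, e ∉ G.edgeSet → w e = 0) →
      ∑ e : G.edgeSet, w e • edgeRow p e = ∑ e, w e • edgeRow p e := by
    intro w hw
    refine Fintype.sum_of_injective Subtype.val Subtype.val_injective _ _ ?_ (fun _ => rfl)
    intro e he
    rw [hw e (fun h => he ⟨⟨e, h⟩, rfl⟩), zero_smul]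
  rw [Fintype.linearIndependent_iff]
  constructor
  · intro h ω hs hz heq i j
    by_cases hij : G.Adj i j
    · let w : Sym2 W → ℝ := Sym2.lift ⟨ω, hs⟩
      have hw : ∀ e, e ∉ G.edgeSet → w e = 0 := by
        intro e
        induction e using Sym2.ind with
        | _ i j => exact hz i j
      refine h (fun e => w e) ?_ ⟨s(i, j), hij⟩
      rw [key w hw]
      funext k
      rw [sum_edgeRow_apply]
      exact heq k
    · exact hz i j hij
  · intro h g hg
    let w : Sym2 W → ℝ := fun e => if he : e ∈ G.edgeSet then g ⟨e, he⟩ else 0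
    have hw : ∀ e, e ∉ G.edgeSet → w e = 0 := fun e he => dif_neg he
    have hwg : ∀ e : G.edgeSet, w e = g e := fun e => dif_pos e.2
    have h0 := h (fun i j => w s(i, j)) (fun i j => by rw [Sym2.eq_swap])
      (fun i j hij => hw _ hij) (fun k => by
        rw [← sum_edgeRow_apply, ← key w hw]
        simp only [hwg, hg]
        rfl)
    rintro ⟨e, he⟩
    induction e using Sym2.ind with
    | _ i j => rw [← hwg]; exact h0 i j

lemma isIndependent_iff_stressFree {W : Type*} [Fintype W] [DecidableEq W]
    (G : SimpleGraph W) : IsIndependent G ↔ ∃ p, StressFree G p := by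
  rw [isIndependent_iff_linearIndependent]
  simp only [linearIndependent_iff_stressFree]

lemma IsIndependent.exists_stressFree_ne {W : Type*} [Fintype W] [DecidableEq W]
    {G : SimpleGraph W} (hG : IsIndependent G) {a b : W} (hab : a ≠ b) :
    ∃ p, StressFree G p ∧ p a ≠ p b := by
  classical
  obtain ⟨p, hp⟩ := (isIndependent_iff_linearIndependent G).1 hG
  by_cases h : p a = p b
  · let P : ℝ → W → Fin 3 → ℝ := fun ε => Function.update p a (p a + ε • 1)
    have hP : Continuous P := by
      refine continuous_const.update a ?_
      fun_prop
    have hP' : ∀ i, Continuous (fun ε => P ε i) := fun i => (continuous_apply i).comp hP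
    have hcont : Continuous (fun ε => fun e : G.edgeSet => edgeRow (P ε) e) := by
      refine continuous_pi ?_
      rintro ⟨e, he⟩
      induction e using Sym2.ind with
      | _ i j =>
        refine continuous_pi fun k => ?_
        simp only [edgeRow, Sym2.lift_mk, rigidityRow]
        split_ifs
        · exact (hP' i).sub (hP' j)
        · exact (hP' j).sub (hP' i)
        · exact continuous_const
    have hopen := (isOpen_setOfPred_linearIndependent (𝕜 := ℝ) (E := W → Fin 3 → ℝ)
      (ι := G.edgeSet)).preimage hcont
    have h0 : (0 : ℝ) ∈ (fun ε => fun e : G.edgeSet => edgeRow (P ε) e) ⁻¹'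
        {f | LinearIndependent ℝ f} := by
      simpa [P] using hp
    obtain ⟨δ, hδ, hball⟩ := Metric.isOpen_iff.1 hopen 0 h0
    refine ⟨P (δ / 2), (linearIndependent_iff_stressFree _ _).1 (hball ?_), ?_⟩
    · rw [Metric.mem_ball, dist_zero_right, Real.norm_eq_abs, abs_of_pos (by linarith)]
      linarith
    · intro heq
      have := congrFun heq 0
      simp [P, hab.symm, h] at this
      linarith
  · exact ⟨p, (linearIndependent_iff_stressFree _ _).1 hp, h⟩

/-! ### Stresses of `H + ab` -/

/-- If `H` is stress-free, a stress `(ω, t)` of `H + ab` is determined by the weight `t` of `ab`;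
so the force at `a` of any fixed set of edges of `H` is proportional to `t`. -/
lemma exists_transferred_force {W : Type*} [Fintype W] [DecidableEq W] {H : SimpleGraph W}
    {p : W → Fin 3 → ℝ} (hp : StressFree H p) (a b : W) (σ : W → Bool) :
    ∃ f : Fin 3 → ℝ, ∀ (ω : W → W → ℝ) (t : ℝ), (∀ i j, ω i j = ω j i) →
      (∀ i j, ¬ H.Adj i j → ω i j = 0) →
      (∀ x, ∑ y, ω x y • (p x - p y) +
        t • (if x = a then p a - p b else if x = b then p b - p a else 0) = 0) →
      ∑ y, (if σ y then ω a y else 0) • (p a - p y) = t • f := by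
  by_cases h : ∃ ω : W → W → ℝ, (∀ i j, ω i j = ω j i) ∧ (∀ i j, ¬ H.Adj i j → ω i j = 0) ∧
      (∀ x, ∑ y, ω x y • (p x - p y) +
        (if x = a then p a - p b else if x = b then p b - p a else 0) = 0)
  · obtain ⟨ω₀, hs₀, hz₀, he₀⟩ := h
    refine ⟨∑ y, (if σ y then ω₀ a y else 0) • (p a - p y), fun ω t hs hz he => ?_⟩
    have hω := hp (fun i j => ω i j - t * ω₀ i j) (fun i j => by simp only [hs i j, hs₀ i j])
      (fun i j hij => by simp [hz i j hij, hz₀ i j hij]) (fun i => by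
        simp only [sub_smul, mul_smul, Finset.sum_sub_distrib, ← Finset.smul_sum]
        linear_combination (norm := module) he i - t • he₀ i)
    rw [Finset.smul_sum]
    refine Finset.sum_congr rfl fun y _ => ?_
    have := sub_eq_zero.1 (hω a y)
    rw [smul_smul]
    split_ifs
    · rw [this]
    · simp
  · refine ⟨0, fun ω t hs hz he => ?_⟩
    have ht : t = 0 := by
      by_contra ht
      refine h ⟨fun i j => t⁻¹ * ω i j, fun i j => by simp only [hs i j],
        fun i j hij => by simp [hz i j hij], fun x => ?_⟩
      have := congrArg (fun z => t⁻¹ • z) (he x)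
      simpa only [smul_add, smul_smul, inv_mul_cancel₀ ht, one_smul, smul_zero,
        Finset.smul_sum] using this
    subst ht
    have hω := hp ω hs hz (fun i => by simpa using he i)
    simp [hω]

/-! ### The pair of roofs -/

/-- The octahedron on `a, b, u, v, c, c'` in equilibrium at `u, v, c, c'`, with
`u = a + e₂`, `v = a + e₃`, `c = a + x e + e₂ + e₃`, `c' = a + e + e₂ + e₃`, `e = b - a`:
all weights are multiples of the weight `Du` of the edge `c'u`. Here `A`, `B`, `C`, `D` stand
for the edges at `a`, `b`, `c`, `c'`. -/
lemma roof_stress {M : Type*} [AddCommGroup M] [Module ℝ M] {a b u v c c' e e₂ e₃ : M} {x : ℝ}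
    (hli : ∀ α β γ : ℝ, α • e + β • e₂ + γ • e₃ = 0 → α = 0 ∧ β = 0 ∧ γ = 0)
    (hb : b = a + e) (hu : u = a + e₂) (hv : v = a + e₃)
    (hc : c = a + x • e + e₂ + e₃) (hc' : c' = a + e + e₂ + e₃)
    {Au Av Bu Bv Ca Cb Cu Cv Da Db Du Dv : ℝ}
    (eu : Au • (u - a) + Bu • (u - b) + Cu • (u - c) + Du • (u - c') = 0)
    (ev : Av • (v - a) + Bv • (v - b) + Cv • (v - c) + Dv • (v - c') = 0)
    (ec : Ca • (c - a) + Cb • (c - b) + Cu • (c - u) + Cv • (c - v) = 0)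
    (ec' : Da • (c' - a) + Db • (c' - b) + Du • (c' - u) + Dv • (c' - v) = 0) :
    Cu = -Du ∧ Cv = -Du ∧ Cb = -x * Du ∧ Ca = (1 + x) * Du ∧ Dv = Du ∧ Db = Du ∧
      Da = -2 * Du ∧ Bu = (x - 1) * Du ∧ Bv = (x - 1) * Du ∧ Au = (1 - x) * Du ∧
      Av = (1 - x) * Du := by
  subst hb hu hv hc hc'
  obtain ⟨c1, c2, c3⟩ := hli ((Ca + Cb + Cu + Cv) * x - Cb) (Ca + Cb + Cv) (Ca + Cb + Cu)
    (by linear_combination (norm := module) ec)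
  obtain ⟨d1, d2, d3⟩ := hli (Da + Du + Dv) (Da + Db + Dv) (Da + Db + Du)
    (by linear_combination (norm := module) ec')
  obtain ⟨u1, u2, u3⟩ := hli (-Bu - x * Cu - Du) (Au + Bu) (-Cu - Du)
    (by linear_combination (norm := module) eu)
  obtain ⟨v1, v2, v3⟩ := hli (-Bv - x * Cv - Dv) (-Cv - Dv) (Av + Bv)
    (by linear_combination (norm := module) ev)
  have hCu : Cu = -Du := by linarith
  have hCv : Cv = -Du := by linarith
  have hDv : Dv = Du := by linarith
  have hs : Ca + Cb = Du := by linarith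
  have hCb : Cb = -x * Du := by
    have : Ca + Cb + Cu + Cv = -Du := by linarith
    rw [this] at c1
    linarith
  subst hCu hCv hCb hDv
  refine ⟨rfl, rfl, rfl, ?_, rfl, ?_, ?_, ?_, ?_, ?_, ?_⟩ <;> linarith

/-- A nonzero vector of `ℝ³` extends to a basis. -/
lemma exists_frame {e : Fin 3 → ℝ} (he : e ≠ 0) : ∃ e₂ e₃ : Fin 3 → ℝ,
    (∀ α β γ : ℝ, α • e + β • e₂ + γ • e₃ = 0 → α = 0 ∧ β = 0 ∧ γ = 0) ∧
    ∀ f : Fin 3 → ℝ, ∃ α β γ : ℝ, f = α • e + β • e₂ + γ • e₃ := by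
  have h1 : LinearIndependent ℝ ![e] := by
    rw [linearIndependent_unique_iff]; simpa using he
  have d1 : 1 < Module.finrank ℝ (Fin 3 → ℝ) := by simp
  have d2 : 2 < Module.finrank ℝ (Fin 3 → ℝ) := by simp
  obtain ⟨e₂, h2⟩ := exists_linearIndependent_snoc_of_lt_finrank h1 d1
  obtain ⟨e₃, h3⟩ := exists_linearIndependent_snoc_of_lt_finrank h2 d2
  have h4 : Fin.snoc (α := fun _ => Fin 3 → ℝ)
      (Fin.snoc (α := fun _ => Fin 3 → ℝ) ![e] e₂) e₃ = ![e, e₂, e₃] := by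
    funext i
    fin_cases i <;> rfl
  change LinearIndependent ℝ (Fin.snoc (α := fun _ => Fin 3 → ℝ)
      (Fin.snoc (α := fun _ => Fin 3 → ℝ) ![e] e₂) e₃) at h3
  rw [h4] at h3
  refine ⟨e₂, e₃, fun α β γ h => ?_, fun f => ?_⟩
  · have := Fintype.linearIndependent_iff.1 h3 ![α, β, γ] (by simpa [Fin.sum_univ_three] using h)
    exact ⟨this 0, this 1, this 2⟩
  · have htop := h3.span_eq_top_of_card_eq_finrank (by simp)
    obtain ⟨g, hg⟩ := (Submodule.mem_span_range_iff_exists_fun ℝ).1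
      (htop ▸ Submodule.mem_top : f ∈ Submodule.span ℝ (Set.range ![e, e₂, e₃]))
    exact ⟨g 0, g 1, g 2, by simpa [Fin.sum_univ_three] using hg.symm⟩

/-! ### Roof-addition -/

/-- **Roof-addition preserves independence in ℝ³**: if `H` is independent in ℝ³ and
`{a,b}` is a non-edge of `H`, then any graph obtained from `H` by roof-addition along
`{a,b}` (for any assignment `σ, τ` of the edges at `a` and `b` to the split vertices)
is independent in ℝ³. -/
theorem roofAddition_independent {V : Type*} [Fintype V] [DecidableEq V]
    (H : SimpleGraph V) (a b : V) (hab : a ≠ b) (hnon : ¬ H.Adj a b)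
    (hind : IsIndependent H) (σ τ : V → Bool) :
    IsIndependent (roofAddition H a b σ τ) := by
  obtain ⟨p, hp, hpab⟩ := hind.exists_stressFree_ne hab
  obtain ⟨e, he⟩ : ∃ e, e = p b - p a := ⟨_, rfl⟩
  have hpb : p b = p a + e := by rw [he]; abel
  obtain ⟨e₂, e₃, hli, hspan⟩ := exists_frame (e := e)
    (by rw [he]; exact sub_ne_zero.2 hpab.symm)
  obtain ⟨f, hf⟩ := exists_transferred_force hp a b σ
  obtain ⟨f₁, f₂, f₃, hf123⟩ := hspan f
  -- The two candidates for `x` exclude the values `f₁ = 1` and `f₁ = -1/2` respectively.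
  obtain ⟨x, hx⟩ : ∃ x : ℝ, (x * (1 + x) - 2) * f₁ ≠ -2 := by
    by_cases h1 : f₁ = 1
    · exact ⟨2, by rw [h1]; norm_num⟩
    · exact ⟨0, fun h => h1 (by linarith)⟩
  rw [isIndependent_iff_stressFree]
  obtain ⟨u, hu⟩ : ∃ u, u = p a + e₂ := ⟨_, rfl⟩
  obtain ⟨v, hv⟩ : ∃ v, v = p a + e₃ := ⟨_, rfl⟩
  obtain ⟨c, hc⟩ : ∃ c, c = p a + x • e + e₂ + e₃ := ⟨_, rfl⟩
  obtain ⟨c', hc'⟩ : ∃ c', c' = p a + e + e₂ + e₃ := ⟨_, rfl⟩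
  refine ⟨Sum.elim p ![p a, p b, u, v, c, c'], fun W hs hz heq => ?_⟩
  have hnon' : ¬ H.Adj b a := fun h => hnon h.symm
  -- Vanishing of the stress off the edges of the new graph.
  have zK : ∀ y z, ¬ (H.Adj y z ∧ (y = a → σ z = false) ∧ (z = a → σ y = false) ∧
      (y = b → τ z = false) ∧ (z = b → τ y = false)) → W (.inl y) (.inl z) = 0 := by
    intro y z h
    refine hz _ _ fun h' => h ?_
    simp only [roofAddition, graphCut, SimpleGraph.sup_adj, SimpleGraph.fromRel_adj, cutRel,
      pasteRel, or_false, and_false] at h'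
    rcases h'.2 with h' | h'
    · exact h'
    · exact ⟨h'.1.symm, h'.2.2.1, h'.2.1, h'.2.2.2.2, h'.2.2.2.1⟩
  have zA : ∀ y, ¬ (H.Adj a y ∧ σ y = true) → W (.inr 0) (.inl y) = 0 := by
    intro y h
    refine hz _ _ fun h' => h ?_
    simpa [roofAddition, graphCut, cutRel, pasteRel] using h'
  have zB : ∀ y, ¬ (H.Adj b y ∧ τ y = true) → W (.inr 1) (.inl y) = 0 := by
    intro y h
    refine hz _ _ fun h' => h ?_
    simpa [roofAddition, graphCut, cutRel, pasteRel] using h'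
  have zR : ∀ y (i : Fin 6), 2 ≤ i → ¬ ((y = a ∨ y = b) ∧ i ≠ 5) → W (.inr i) (.inl y) = 0 := by
    intro y i hi h
    refine hz _ _ fun h' => h ?_
    simp only [roofAddition, graphCut, SimpleGraph.sup_adj, SimpleGraph.fromRel_adj, cutRel,
      pasteRel, or_false, false_or] at h'
    rcases h' with ⟨-, ⟨rfl, -⟩ | ⟨rfl, -⟩⟩ | ⟨-, h1, rfl | rfl | rfl⟩
    · exact absurd hi (by decide)
    · exact absurd hi (by decide)
    all_goals exact ⟨h1, by decide⟩
  have zP : ∀ i j : Fin 6, (i = j ∨ (i < 2 ∧ j < 2) ∨ (i < 2 ∧ j = 4) ∨ (i = 4 ∧ j < 2) ∨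
      (2 ≤ i ∧ i < 4 ∧ 2 ≤ j ∧ j < 4) ∨ (4 ≤ i ∧ 4 ≤ j)) → W (.inr i) (.inr j) = 0 := by
    intro i j h
    refine hz _ _ fun h' => ?_
    simp only [roofAddition, graphCut, SimpleGraph.sup_adj, SimpleGraph.fromRel_adj, cutRel,
      pasteRel, or_false, false_or, and_false] at h'
    replace h' := h'.2
    revert i j
    decide
  have sR : ∀ (i : Fin 6) (z : Fin 3 → ℝ), 2 ≤ i → ∑ y, W (.inr i) (.inl y) • (z - p y) =
      W (.inr i) (.inl a) • (z - p a) + W (.inr i) (.inl b) • (z - p b) := by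
    intro i z hi
    refine Fintype.sum_eq_add a b hab fun y hy => ?_
    rw [zR y i hi (fun h => h.1.elim hy.1 hy.2), zero_smul]
  have z5a : W (.inr 5) (.inl a) = 0 := zR a 5 (by decide) (fun h => h.2 rfl)
  have z5b : W (.inr 5) (.inl b) = 0 := zR b 5 (by decide) (fun h => h.2 rfl)
  -- Equilibrium at the new vertices.
  have eu := heq (.inr 2)
  have ev := heq (.inr 3)
  have ec := heq (.inr 4)
  have ec' := heq (.inr 5)
  have ea₁ := heq (.inl a)
  have eb₁ := heq (.inl b)
  have ea₂ := heq (.inr 0)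
  have eb₂ := heq (.inr 1)
  simp only [Fintype.sum_sum_type, Fin.sum_univ_six, Sum.elim_inl, Sum.elim_inr,
    Matrix.cons_val] at eu ev ec ec' ea₁ eb₁ ea₂ eb₂
  rw [sR _ _ (by decide)] at eu ev ec ec'
  rw [zP 2 2 (by decide), zP 2 3 (by decide), hs (.inr 2) (.inr 4), hs (.inr 2) (.inr 5)] at eu
  rw [zP 3 2 (by decide), zP 3 3 (by decide), hs (.inr 3) (.inr 4), hs (.inr 3) (.inr 5)] at ev
  rw [zP 4 0 (by decide), zP 4 1 (by decide), zP 4 4 (by decide), zP 4 5 (by decide)] at ec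
  rw [zP 5 4 (by decide), zP 5 5 (by decide), z5a, z5b] at ec'
  rw [zP 0 0 (by decide), zP 0 1 (by decide), zP 0 4 (by decide), hs (.inr 0) (.inr 2),
    hs (.inr 0) (.inr 3), hs (.inr 0) (.inr 5)] at ea₂
  rw [zP 1 0 (by decide), zP 1 1 (by decide), zP 1 4 (by decide), hs (.inr 1) (.inr 2),
    hs (.inr 1) (.inr 3), hs (.inr 1) (.inr 5)] at eb₂
  simp only [hs (.inl _) (.inr _)] at ea₁ eb₁
  rw [zA a (fun h => H.irrefl h.1), zB a (fun h => hnon' h.1), z5a] at ea₁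
  rw [zA b (fun h => hnon h.1), zB b (fun h => H.irrefl h.1), z5b] at eb₁
  obtain ⟨rCu, rCv, rCb, rCa, rDv, rDb, rDa, rBu, rBv, rAu, rAv⟩ := roof_stress
    (Au := W (.inr 2) (.inl a) + W (.inr 2) (.inr 0))
    (Av := W (.inr 3) (.inl a) + W (.inr 3) (.inr 0))
    (Bu := W (.inr 2) (.inl b) + W (.inr 2) (.inr 1))
    (Bv := W (.inr 3) (.inl b) + W (.inr 3) (.inr 1))
    (Ca := W (.inr 4) (.inl a)) (Cb := W (.inr 4) (.inl b))
    (Cu := W (.inr 4) (.inr 2)) (Cv := W (.inr 4) (.inr 3))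
    (Da := W (.inr 5) (.inr 0)) (Db := W (.inr 5) (.inr 1))
    (Du := W (.inr 5) (.inr 2)) (Dv := W (.inr 5) (.inr 3)) hli hpb hu hv hc hc'
    (by linear_combination (norm := module) eu) (by linear_combination (norm := module) ev)
    (by linear_combination (norm := module) ec) (by linear_combination (norm := module) ec')
  generalize hDu : W (.inr 5) (.inr 2) = m at *
  -- The weighting of `H` obtained by merging `a₁, a₂` and `b₁, b₂`.
  let ω : V → V → ℝ := fun y z => W (.inl y) (.inl z) +
    (if y = a then W (.inr 0) (.inl z) else 0) + (if z = a then W (.inr 0) (.inl y) else 0) +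
    (if y = b then W (.inr 1) (.inl z) else 0) + (if z = b then W (.inr 1) (.inl y) else 0)
  have ωs : ∀ y z, ω y z = ω z y := fun y z => by
    simp only [ω, hs (.inl y) (.inl z)]
    ring
  have ωz : ∀ y z, ¬ H.Adj y z → ω y z = 0 := by
    intro y z h
    have h' : ¬ H.Adj z y := fun h' => h h'.symm
    simp only [ω]
    rw [zK y z (fun k => h k.1)]
    have i1 : (if y = a then W (.inr 0) (.inl z) else 0) = 0 := by
      split_ifs with k
      · exact zA z (fun l => h (k ▸ l.1))
      · rfl
    have i2 : (if z = a then W (.inr 0) (.inl y) else 0) = 0 := by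
      split_ifs with k
      · exact zA y (fun l => h' (k ▸ l.1))
      · rfl
    have i3 : (if y = b then W (.inr 1) (.inl z) else 0) = 0 := by
      split_ifs with k
      · exact zB z (fun l => h (k ▸ l.1))
      · rfl
    have i4 : (if z = b then W (.inr 1) (.inl y) else 0) = 0 := by
      split_ifs with k
      · exact zB y (fun l => h' (k ▸ l.1))
      · rfl
    rw [i1, i2, i3, i4]
    norm_num
  have ωa : ∀ y, ω a y = W (.inl a) (.inl y) + W (.inr 0) (.inl y) := by
    intro y
    simp only [ω, if_true, if_neg hab, zA a (fun h => H.irrefl h.1), zB a (fun h => hnon' h.1),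
      ite_self, add_zero]
  have ωb : ∀ y, ω b y = W (.inl b) (.inl y) + W (.inr 1) (.inl y) := by
    intro y
    simp only [ω, if_true, if_neg hab.symm, zA b (fun h => hnon h.1), zB b (fun h => H.irrefl h.1),
      ite_self, add_zero]
  -- Each edge of `H` at `a` (or `b`) goes to one of the two copies, so its weight is not lost.
  have ωA : ∀ y, W (.inr 0) (.inl y) = if σ y then ω a y else 0 := by
    intro y
    split_ifs with h
    · rw [ωa, zK a y (fun k => by simp [k.2.1 rfl] at h), zero_add]
    · exact zA y (fun k => h k.2)
  have ωB : ∀ y, W (.inr 1) (.inl y) = if τ y then ω b y else 0 := by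
    intro y
    split_ifs with h
    · rw [ωb, zK b y (fun k => by simp [k.2.2.2.1 rfl] at h), zero_add]
    · exact zB y (fun k => h k.2)
  have ωe : ∀ y, ∑ z, ω y z • (p y - p z) + (m * (x * (1 + x) - 2)) •
      (if y = a then p a - p b else if y = b then p b - p a else 0) = 0 := by
    intro y
    by_cases hya : y = a
    · subst hya
      simp only [ωa, add_smul, Finset.sum_add_distrib, if_true]
      have q1 : W (.inr 2) (.inl y) = (1 - x) * m - W (.inr 2) (.inr 0) := by linarith
      have q2 : W (.inr 3) (.inl y) = (1 - x) * m - W (.inr 3) (.inr 0) := by linarith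
      rw [rCa, q1, q2] at ea₁
      rw [rDa] at ea₂
      rw [hpb] at ea₁ ea₂ ⊢
      subst hu hv hc hc'
      linear_combination (norm := module) ea₁ + ea₂
    · by_cases hyb : y = b
      · subst hyb
        simp only [ωb, add_smul, Finset.sum_add_distrib, if_true, if_neg hya]
        have q1 : W (.inr 2) (.inl y) = (x - 1) * m - W (.inr 2) (.inr 1) := by linarith
        have q2 : W (.inr 3) (.inl y) = (x - 1) * m - W (.inr 3) (.inr 1) := by linarith
        rw [rCb, q1, q2] at eb₁
        rw [rDb] at eb₂
        generalize ∑ z, W (.inl y) (.inl z) • (p y - p z) = S₁ at eb₁ ⊢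
        generalize ∑ z, W (.inr 1) (.inl z) • (p y - p z) = S₂ at eb₂ ⊢
        rw [hpb] at eb₁ eb₂ ⊢
        subst hu hv hc hc'
        linear_combination (norm := module) eb₁ + eb₂
      · have ey := heq (.inl y)
        simp only [Fintype.sum_sum_type, Fin.sum_univ_six, Sum.elim_inl, Sum.elim_inr,
          Matrix.cons_val, hs (.inl y) (.inr _)] at ey
        rw [zR y 2 (by decide) (fun h => h.1.elim hya hyb),
          zR y 3 (by decide) (fun h => h.1.elim hya hyb),
          zR y 4 (by decide) (fun h => h.1.elim hya hyb),
          zR y 5 (by decide) (fun h => h.1.elim hya hyb)] at ey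
        simp only [ω, if_neg hya, if_neg hyb, add_smul, Finset.sum_add_distrib, ite_smul,
          zero_smul, Finset.sum_ite_eq', Finset.sum_const_zero, Finset.mem_univ, if_true]
        linear_combination (norm := module) ey
  have hfa := hf ω _ ωs ωz ωe
  simp only [← ωA] at hfa
  -- The `e`-coordinate of the equilibrium at `a₂` forces the roof parameter `m` to vanish.
  have hm : m = 0 := by
    rw [hfa, hf123, rDa, hu, hv, hc'] at ea₂
    obtain ⟨h1, -, -⟩ := hli (m * (x * (1 + x) - 2) * f₁ + 2 * m)
      (m * (x * (1 + x) - 2) * f₂ - W (.inr 2) (.inr 0) + 2 * m)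
      (m * (x * (1 + x) - 2) * f₃ - W (.inr 3) (.inr 0) + 2 * m)
      (by linear_combination (norm := module) ea₂)
    have h2 : m * ((x * (1 + x) - 2) * f₁ + 2) = 0 := by linarith
    refine (mul_eq_zero.1 h2).resolve_right fun h => hx (by linarith)
  subst hm
  have hω := hp ω ωs ωz (fun y => by simpa using ωe y)
  have hA : ∀ y, W (.inr 0) (.inl y) = 0 := fun y => by rw [ωA, hω, ite_self]
  have hB : ∀ y, W (.inr 1) (.inl y) = 0 := fun y => by rw [ωB, hω, ite_self]
  have hK : ∀ y z, W (.inl y) (.inl z) = 0 := fun y z => by simpa [ω, hA, hB] using hω y z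
  simp only [mul_zero, neg_zero] at rCu rCv rCb rCa rDb rDa rBu rBv rAu rAv
  simp only [hA, hB, zero_smul, Finset.sum_const_zero, rDa, rDb] at ea₂ eb₂
  obtain ⟨-, ha2, ha3⟩ := hli 0 (-W (.inr 2) (.inr 0)) (-W (.inr 3) (.inr 0))
    (by rw [hu, hv] at ea₂; linear_combination (norm := module) ea₂)
  obtain ⟨-, hb2, hb3⟩ := hli (W (.inr 2) (.inr 1) + W (.inr 3) (.inr 1))
    (-W (.inr 2) (.inr 1)) (-W (.inr 3) (.inr 1))
    (by rw [hu, hv, hpb] at eb₂; linear_combination (norm := module) eb₂)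
  rw [neg_eq_zero] at ha2 ha3 hb2 hb3
  rw [ha2, add_zero] at rAu
  rw [ha3, add_zero] at rAv
  rw [hb2, add_zero] at rBu
  rw [hb3, add_zero] at rBv
  have hR : ∀ (i : Fin 6) y, W (.inr i) (.inl y) = 0 := by
    intro i y
    by_cases hi : 2 ≤ i
    · by_cases h : (y = a ∨ y = b) ∧ i ≠ 5
      · obtain ⟨rfl | rfl, -⟩ := h <;> fin_cases i <;> 
          first | assumption | exact absurd hi (by decide)
      · exact zR y i hi h
    · fin_cases i
      · exact hA y
      · exact hB y
      all_goals exact absurd (by decide) hi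
  have hP : ∀ i j : Fin 6, j ≤ i → W (.inr i) (.inr j) = 0 := by
    intro i j hij
    fin_cases i <;> fin_cases j <;>
      first | assumption | exact zP _ _ (by decide) | exact absurd hij (by decide)
  rintro (y | i) (z | j)
  · exact hK y z
  · rw [hs]; exact hR j y
  · exact hR i z
  · rcases le_total j i with h | h
    · exact hP i j h
    · rw [hs]; exact hP j i h
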